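/- arXiv:1705.02212 — 3 statements merged into one kernel-verified Lean document; each statement's English description precedes it below -/
import Mathlib

section
/- Let n ≥ 1 and let μ be the Haar probability measure on the orthogonal group O(n). Then for every real n×n matrix M and every real symmetric positive semidefinite n×n matrix Σ, ∫_{O(n)} tr( M U Σ Uᵀ Mᵀ ) dμ(U) = (1/n) · tr(M Mᵀ) · tr(Σ). (The trace contrast is multiplicatively separable for the linear mechanism X ↦ M X with generic group O(n): the expected generic contrast of the covariance Σ of the cause under the mechanism M factorizes as K(M)·tr(Σ) with K(M) = tr(M Mᵀ)/n.) -/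
open MeasureTheory Matrix

noncomputable instance matrixMeasurableSpace (n : ℕ) :
    MeasurableSpace (Matrix (Fin n) (Fin n) ℝ) :=
  inferInstanceAs (MeasurableSpace (Fin n → Fin n → ℝ))

instance matrixBorelSpace (n : ℕ) : BorelSpace (Matrix (Fin n) (Fin n) ℝ) :=
  inferInstanceAs (BorelSpace (Fin n → Fin n → ℝ))

lemma aux_conj_inv (n : ℕ)
    [BorelSpace (orthogonalGroup (Fin n) ℝ)]
    (μ : Measure (orthogonalGroup (Fin n) ℝ)) [μ.IsHaarMeasure]
    (S : Matrix (Fin n) (Fin n) ℝ) (V : Matrix (Fin n) (Fin n) ℝ)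
    (hV : V ∈ orthogonalGroup (Fin n) ℝ) (i j : Fin n) :
    ∫ U : orthogonalGroup (Fin n) ℝ, (V * ((U : Matrix (Fin n) (Fin n) ℝ) * S *
      (U : Matrix (Fin n) (Fin n) ℝ)ᵀ) * Vᵀ) i j ∂μ
    = ∫ U : orthogonalGroup (Fin n) ℝ, ((U : Matrix (Fin n) (Fin n) ℝ) * S *
      (U : Matrix (Fin n) (Fin n) ℝ)ᵀ) i j ∂μ := by
  rw [← integral_mul_left_eq_self (μ := μ) (fun U : orthogonalGroup (Fin n) ℝ =>
    ((U : Matrix (Fin n) (Fin n) ℝ) * S * (U : Matrix (Fin n) (Fin n) ℝ)ᵀ) i j) ⟨V, hV⟩]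
  congr 1
  ext U
  simp only [Submonoid.coe_mul, Matrix.transpose_mul, Matrix.mul_assoc]

lemma aux_integrable (n : ℕ)
    [BorelSpace (orthogonalGroup (Fin n) ℝ)]
    (μ : Measure (orthogonalGroup (Fin n) ℝ)) [IsProbabilityMeasure μ]
    (S : Matrix (Fin n) (Fin n) ℝ) (i j : Fin n) :
    Integrable (fun U : orthogonalGroup (Fin n) ℝ => ((U : Matrix (Fin n) (Fin n) ℝ) * S *
      (U : Matrix (Fin n) (Fin n) ℝ)ᵀ) i j) μ := by
  have hc : ∀ a b : Fin n, Continuous (fun U : orthogonalGroup (Fin n) ℝ =>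
      (U : Matrix (Fin n) (Fin n) ℝ) a b) := fun a b =>
    (continuous_id.matrix_elem a b).comp continuous_subtype_val
  have hb : ∀ (U : orthogonalGroup (Fin n) ℝ) (a b : Fin n),
      ‖(U : Matrix (Fin n) (Fin n) ℝ) a b‖ ≤ 1 := fun U a b =>
    entry_norm_bound_of_unitary U.2 a b
  simp only [Matrix.mul_apply, Matrix.transpose_apply, Finset.sum_mul]
  refine integrable_finsetSum _ fun b _ => integrable_finsetSum _ fun a _ => ?_
  refine Integrable.of_bound (C := ‖S a b‖)
    (((hc i a).mul continuous_const).mul (hc j b)).measurable.aestronglyMeasurable ?_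
  filter_upwards with U
  rw [norm_mul, norm_mul]
  calc _ ≤ 1 * ‖S a b‖ * 1 := by
        gcongr
        · exact hb U i a
        · exact hb U j b
    _ = _ := by ring

/-- multiplicative separability of the trace contrast for linear
mechanisms with the orthogonal group as generic group:
`∫_{O(n)} tr(M U Σ Uᵀ Mᵀ) dμ(U) = (1/n)·tr(M Mᵀ)·tr(Σ)`. -/
theorem trace_contrast_multiplicatively_separable
    (n : ℕ) (hn : 1 ≤ n)
    [BorelSpace (orthogonalGroup (Fin n) ℝ)]
    (μ : Measure (orthogonalGroup (Fin n) ℝ))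
    [μ.IsHaarMeasure] [IsProbabilityMeasure μ]
    (M : Matrix (Fin n) (Fin n) ℝ)
    (S : Matrix (Fin n) (Fin n) ℝ) (hS : S.PosSemidef) :
    (∫ U : orthogonalGroup (Fin n) ℝ,
        (M * (U : Matrix (Fin n) (Fin n) ℝ) * S * (U : Matrix (Fin n) (Fin n) ℝ)ᵀ * Mᵀ).trace ∂μ)
      = (1 / n) * (M * Mᵀ).trace * S.trace := by
  set F : orthogonalGroup (Fin n) ℝ → Matrix (Fin n) (Fin n) ℝ := fun U =>
    (U : Matrix (Fin n) (Fin n) ℝ) * S * (U : Matrix (Fin n) (Fin n) ℝ)ᵀ with hF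
  have hint : ∀ i j, Integrable (fun U => F U i j) μ := aux_integrable n μ S
  have hinv : ∀ V ∈ orthogonalGroup (Fin n) ℝ, ∀ i j,
      ∫ U, (V * F U * Vᵀ) i j ∂μ = ∫ U, F U i j ∂μ := fun V hV i j =>
    aux_conj_inv n μ S V hV i j
  have hoff : ∀ i j, i ≠ j → ∫ U, F U i j ∂μ = 0 := by
    intro i j hij
    have h := hinv (diagonal fun k => if k = i then -1 else 1) (by
      rw [mem_orthogonalGroup_iff, diagonal_transpose,
        diagonal_mul_diagonal, ← diagonal_one]
      congr 1
      ext k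
      by_cases hk : k = i <;> simp [hk]) i j
    simp only [diagonal_transpose, mul_diagonal, diagonal_mul, if_true, if_neg hij.symm,
      mul_one, neg_mul, one_mul, integral_neg] at h
    linarith
  have hdiag : ∀ i j, ∫ U, F U i i ∂μ = ∫ U, F U j j ∂μ := by
    intro i j
    have h := hinv ((1 : Matrix (Fin n) (Fin n) ℝ).submatrix (Equiv.swap i j) id) (by
      rw [mem_orthogonalGroup_iff, transpose_submatrix]
      simp [submatrix_mul_equiv, ← submatrix_mul _ _ _ _ _ Function.bijective_id]) j j
    rw [← h]
    congr 1
    ext U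
    simp [Matrix.mul_apply, Matrix.one_apply]
  have htr : ∀ U, ∑ i, F U i i = S.trace := by
    intro U
    change (F U).trace = _
    rw [hF]
    have := (mem_orthogonalGroup_iff' _ _).1 U.2
    simp only
    rw [Matrix.mul_assoc, Matrix.trace_mul_comm, Matrix.mul_assoc, this, Matrix.mul_one]
  have hn0 : (n : ℝ) ≠ 0 := by positivity
  have hval : ∀ i, ∫ U, F U i i ∂μ = S.trace / n := by
    intro i
    have h1 : ∫ U, ∑ k, F U k k ∂μ = S.trace := by simp [htr]
    rw [integral_finsetSum _ fun k _ => hint k k,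
      Finset.sum_congr rfl fun k _ => hdiag k i] at h1
    simp at h1
    field_simp
    linarith
  have hexp : ∀ U : orthogonalGroup (Fin n) ℝ,
      (M * (U : Matrix (Fin n) (Fin n) ℝ) * S * (U : Matrix (Fin n) (Fin n) ℝ)ᵀ * Mᵀ).trace
      = ∑ k, ∑ j, ∑ i, M k i * M k j * F U i j := by
    intro U
    have : M * (U : Matrix (Fin n) (Fin n) ℝ) * S * (U : Matrix (Fin n) (Fin n) ℝ)ᵀ * Mᵀ
      = M * F U * Mᵀ := by simp only [hF, Matrix.mul_assoc]
    rw [this]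
    simp only [Matrix.trace, Matrix.diag, Matrix.mul_apply (M := M * F U),
      Matrix.mul_apply (M := M), Matrix.transpose_apply, Finset.sum_mul]
    refine Finset.sum_congr rfl fun k _ => Finset.sum_congr rfl fun j _ =>
      Finset.sum_congr rfl fun i _ => by ring
  simp only [hexp]
  have hs : ∀ i j, ∫ U, F U i j ∂μ = if i = j then S.trace / n else 0 := by
    intro i j
    split_ifs with h
    · subst h; exact hval i
    · exact hoff i j h
  have hI : ∀ k j i, Integrable (fun U => M k i * M k j * F U i j) μ := fun k j i =>
    (hint i j).const_mul _
  rw [integral_finsetSum _ fun k _ => integrable_finsetSum _ fun j _ =>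
    integrable_finsetSum _ fun i _ => hI k j i]
  have : ∀ k, ∫ U, ∑ j, ∑ i, M k i * M k j * F U i j ∂μ
      = ∑ j, M k j * M k j * (S.trace / n) := by
    intro k
    rw [integral_finsetSum _ fun j _ => integrable_finsetSum _ fun i _ => hI k j i]
    refine Finset.sum_congr rfl fun j _ => ?_
    rw [integral_finsetSum _ fun i _ => hI k j i]
    simp [integral_const_mul, hs]
  simp only [this, ← Finset.sum_mul]
  have hM : (M * Mᵀ).trace = ∑ k, ∑ j, M k j * M k j := by
    simp [Matrix.trace, Matrix.mul_apply]
  rw [hM]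
  ring
end

section
/- Let f : [0,1] → [0,1] be a strictly increasing C¹ bijection with f(0)=0, f(1)=1 and f'(x) > 0 for all x, and let p be a probability density on the circle ℝ/ℤ, identified with a measurable function p : [0,1) → ℝ≥0 of integral 1 extended 1-periodically, with p·log p and log f' integrable. For t ∈ [0,1] let p_t(x) := p(x − t mod 1) be the translated density, and let (f·p_t)(y) := p_t(f⁻¹(y))/f'(f⁻¹(y)) be its pushforward under f. Then the expected generic contrast of the negative entropy contrast under the generic group of circle translations satisfies ∫₀¹ ( ∫₀¹ (f·p_t)(y) log (f·p_t)(y) dy ) dt = ∫₀¹ p(x) log p(x) dx − ∫₀¹ log f'(x) dx. (The negative entropy contrast is additively separable with K(f) = −∫₀¹ log f'.) -/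
open MeasureTheory Set

/-- the negative entropy contrast is additively separable for the generic
group of circle translations: averaging over the translation `t` drawn uniformly on
`[0,1]`, the negative entropy of the pushforward under `f` of the translated density
`p_t(x) = p(x − t)` satisfies
`∫₀¹ ( ∫₀¹ (f·p_t) log (f·p_t) ) dt = ∫₀¹ p log p − ∫₀¹ log f'`. -/
theorem neg_entropy_additively_separable_circle
    (f f' finv : ℝ → ℝ)
    (hmono : StrictMonoOn f (Icc 0 1))
    (hbij : Set.BijOn f (Icc 0 1) (Icc 0 1))
    (hderiv : ∀ x ∈ Icc (0:ℝ) 1, HasDerivAt f (f' x) x)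
    (hcont : ContinuousOn f' (Icc 0 1))
    (hpos : ∀ x ∈ Icc (0:ℝ) 1, 0 < f' x)
    (h0 : f 0 = 0) (h1 : f 1 = 1)
    (hfinv_left : ∀ x ∈ Icc (0:ℝ) 1, finv (f x) = x)
    (hfinv_right : ∀ y ∈ Icc (0:ℝ) 1, f (finv y) = y)
    (p : ℝ → ℝ)
    (hp_periodic : Function.Periodic p 1)
    (hp_nonneg : ∀ x : ℝ, 0 ≤ p x)
    (hp_prob : (∫ x in (0:ℝ)..1, p x) = 1)
    (hint_plogp : IntervalIntegrable (fun x => p x * Real.log (p x)) volume 0 1)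
    (hint_logf' : IntervalIntegrable (fun x => Real.log (f' x)) volume 0 1) :
    (∫ t in (0:ℝ)..1,
        ∫ y in (0:ℝ)..1,
          (p (finv y - t) / f' (finv y)) * Real.log (p (finv y - t) / f' (finv y)))
      = (∫ x in (0:ℝ)..1, p x * Real.log (p x))
        - ∫ x in (0:ℝ)..1, Real.log (f' x) := by
  have hI : Icc (0:ℝ) 1 = Set.uIcc 0 1 := (Set.uIcc_of_le zero_le_one).symm
  have hpint : IntervalIntegrable p volume 0 1 := by
    by_contra h
    rw [intervalIntegral.integral_undef h] at hp_prob
    exact zero_ne_one hp_prob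
  have hpall : ∀ a b, IntervalIntegrable p volume a b := fun a b =>
    hp_periodic.intervalIntegrable₀ one_ne_zero hpint a b
  have hqper : Function.Periodic (fun x => p x * Real.log (p x)) 1 := by
    intro x
    simp only [hp_periodic x]
  have hqall : ∀ a b, IntervalIntegrable (fun x => p x * Real.log (p x)) volume a b := fun a b =>
    hqper.intervalIntegrable₀ one_ne_zero hint_plogp a b
  have hL : ContinuousOn (fun x => Real.log (f' x)) (Set.uIcc 0 1) := by
    rw [← hI]
    exact hcont.log (fun x hx => (hpos x hx).ne')
  -- inner integral
  have hinner : ∀ t : ℝ, (∫ y in (0:ℝ)..1,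
          (p (finv y - t) / f' (finv y)) * Real.log (p (finv y - t) / f' (finv y)))
      = (∫ x in (0:ℝ)..1, p x * Real.log (p x))
        - ∫ x in (0:ℝ)..1, p (x - t) * Real.log (f' x) := by
    intro t
    have h2 : IntervalIntegrable (fun x => p (x - t)) volume 0 1 := by
      have := (hpall (0 - t) (1 - t)).comp_sub_right t
      simpa using this
    have h3 : IntervalIntegrable (fun x => p (x - t) * Real.log (p (x - t))) volume 0 1 := by
      have := (hqall (0 - t) (1 - t)).comp_sub_right t
      simpa using this
    have h4 : (∫ x in (0:ℝ)..1, p x * Real.log (p x))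
        = ∫ x in (0:ℝ)..1, p (x - t) * Real.log (p (x - t)) := by
      rw [intervalIntegral.integral_comp_sub_right (fun x => p x * Real.log (p x)) t]
      have := hqper.intervalIntegral_add_eq 0 (0 - t)
      rw [zero_add] at this
      rw [this]
      congr 1
      ring
    rw [h4, ← intervalIntegral.integral_sub h3 (h2.mul_continuousOn hL)]
    rw [intervalIntegral.integral_of_le zero_le_one, intervalIntegral.integral_of_le zero_le_one,
      ← integral_Icc_eq_integral_Ioc, ← integral_Icc_eq_integral_Ioc]
    have hcv := integral_image_eq_integral_abs_deriv_smul (measurableSet_Icc (a := (0:ℝ)) (b := 1))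
      (fun x hx => (hderiv x hx).hasDerivWithinAt) hbij.injOn
      (fun y => (p (finv y - t) / f' (finv y)) * Real.log (p (finv y - t) / f' (finv y)))
    rw [hbij.image_eq] at hcv
    rw [hcv]
    refine setIntegral_congr_fun measurableSet_Icc (fun x hx => ?_)
    have hf := hpos x hx
    simp only [hfinv_left x hx, smul_eq_mul, abs_of_pos hf]
    rcases (hp_nonneg (x - t)).eq_or_lt with h | h
    · simp [← h]
    · rw [Real.log_div h.ne' hf.ne']
      field_simp
  have hper' : ∀ x : ℝ, ∫ t in (0:ℝ)..1, p (x - t) = 1 := by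
    intro x
    rw [intervalIntegral.integral_comp_sub_left p x]
    have := hp_periodic.intervalIntegral_add_eq 0 (x - 1)
    rw [zero_add, hp_prob] at this
    refine Eq.trans ?_ this.symm
    congr 1
    ring
  -- joint integrability
  have hjoint : Integrable (Function.uncurry fun t x : ℝ => p (x - t) * Real.log (f' x))
      ((volume.restrict (Ioc (0:ℝ) 1)).prod (volume.restrict (Ioc (0:ℝ) 1))) := by
    have hF : Integrable ((Ioc (0:ℝ) 1).indicator fun x => Real.log (f' x)) volume := by
      rw [integrable_indicator_iff measurableSet_Ioc]
      exact (intervalIntegrable_iff_integrableOn_Ioc_of_le zero_le_one).1 hint_logf'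
    have hG : Integrable ((Ioc (-1:ℝ) 1).indicator fun u => p (-u)) volume := by
      rw [integrable_indicator_iff measurableSet_Ioc]
      refine (intervalIntegrable_iff_integrableOn_Ioc_of_le (by norm_num)).1 ?_
      have := (hpall 1 (-1)).comp_sub_left 0
      simpa using this
    have hc := hF.convolution_integrand (ContinuousLinearMap.mul ℝ ℝ) hG
    rw [Measure.prod_restrict]
    refine (hc.integrableOn (s := Ioc (0:ℝ) 1 ×ˢ Ioc (0:ℝ) 1)).congr_fun ?_
      (measurableSet_Ioc.prod measurableSet_Ioc)
    rintro ⟨t, x⟩ ⟨ht, hx⟩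
    have hm : t - x ∈ Ioc (-1:ℝ) 1 := by
      simp only [mem_Ioc] at ht hx ⊢
      constructor <;> linarith [ht.1, ht.2, hx.1, hx.2]
    simp only [mem_Ioc] at ht hx
    simp [Function.uncurry, indicator_of_mem hm, hx.1, hx.2, mul_comm]
  have hsw : (∫ t in (0:ℝ)..1, ∫ x in (0:ℝ)..1, p (x - t) * Real.log (f' x))
      = ∫ x in (0:ℝ)..1, Real.log (f' x) := by
    simp only [intervalIntegral.integral_of_le (zero_le_one (α := ℝ))] at hper' ⊢
    rw [integral_integral_swap hjoint]
    simp only [integral_mul_const, hper', one_mul]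
  have hintout : IntervalIntegrable
      (fun t => ∫ x in (0:ℝ)..1, p (x - t) * Real.log (f' x)) volume 0 1 := by
    rw [intervalIntegrable_iff_integrableOn_Ioc_of_le zero_le_one]
    simp only [intervalIntegral.integral_of_le (zero_le_one (α := ℝ))]
    exact hjoint.integral_prod_left
  simp only [hinner]
  rw [intervalIntegral.integral_sub intervalIntegrable_const hintout, hsw]
  simp
end

section
/- Let f : [0,1] → [0,1] be a strictly increasing C¹ bijection with f(0)=0, f(1)=1 and f'(x) > 0 for all x, and suppose f is not the identity map. Then K(f) + K(f⁻¹) > 0, where K(f) := −∫₀¹ log f'(x) dx; equivalently ∫₀¹ log f'(x) dx + ∫₀¹ log (f⁻¹)'(y) dy < 0. (This quantity equals D_KL(U ‖ f⁻¹·U) + D_KL(U ‖ f·U), the sum of the Kullback–Leibler divergences between the uniform distribution U on [0,1] and its pushforwards under f and f⁻¹, so the forward–backward condition for the negative entropy contrast holds for every non-identity mechanism f.) -/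
open MeasureTheory Set

/-- forward–backward condition for the negative entropy contrast: for a
strictly increasing C¹ bijection `f` of `[0,1]` fixing the endpoints, with positive
derivative and different from the identity, `K(f) + K(f⁻¹) > 0` where
`K(f) = −∫₀¹ log f'`; equivalently `∫₀¹ log f' + ∫₀¹ log (f⁻¹)' < 0`, with
`(f⁻¹)'(y) = 1/f'(f⁻¹(y))`. -/
theorem neg_entropy_forward_backward
    (f f' finv : ℝ → ℝ)
    (hmono : StrictMonoOn f (Icc 0 1))
    (hbij : Set.BijOn f (Icc 0 1) (Icc 0 1))
    (hderiv : ∀ x ∈ Icc (0:ℝ) 1, HasDerivAt f (f' x) x)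
    (hcont : ContinuousOn f' (Icc 0 1))
    (hpos : ∀ x ∈ Icc (0:ℝ) 1, 0 < f' x)
    (h0 : f 0 = 0) (h1 : f 1 = 1)
    (hfinv_left : ∀ x ∈ Icc (0:ℝ) 1, finv (f x) = x)
    (hfinv_right : ∀ y ∈ Icc (0:ℝ) 1, f (finv y) = y)
    (hfinv_deriv : ∀ y ∈ Icc (0:ℝ) 1, HasDerivAt finv (1 / f' (finv y)) y)
    (hne : ∃ x ∈ Icc (0:ℝ) 1, f x ≠ x) :
    (0 < (-∫ x in (0:ℝ)..1, Real.log (f' x))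
          + (-∫ y in (0:ℝ)..1, Real.log (1 / f' (finv y)))) ∧
    ((∫ x in (0:ℝ)..1, Real.log (f' x))
        + (∫ y in (0:ℝ)..1, Real.log (1 / f' (finv y))) < 0) := by
  have hmaps : ∀ y ∈ Icc (0:ℝ) 1, finv y ∈ Icc (0:ℝ) 1 := by
    intro y hy
    obtain ⟨x, hx, rfl⟩ := hbij.surjOn hy
    rw [hfinv_left x hx]
    exact hx
  have hu : uIcc (0:ℝ) 1 = Icc 0 1 := uIcc_of_le zero_le_one
  have hg0 : finv 0 = 0 := by
    have := hfinv_left 0 (by simp)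
    rwa [h0] at this
  have hg1 : finv 1 = 1 := by
    have := hfinv_left 1 (by simp)
    rwa [h1] at this
  have hgc : ContinuousOn finv (Icc 0 1) :=
    fun y hy => (hfinv_deriv y hy).continuousAt.continuousWithinAt
  have hfg : ContinuousOn (fun y => f' (finv y)) (Icc 0 1) := hcont.comp hgc hmaps
  have hg'c : ContinuousOn (fun y => 1 / f' (finv y)) (Icc 0 1) :=
    continuousOn_const.div hfg (fun y hy => (hpos _ (hmaps y hy)).ne')
  have hg'pos : ∀ y ∈ Icc (0:ℝ) 1, 0 < 1 / f' (finv y) :=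
    fun y hy => one_div_pos.mpr (hpos _ (hmaps y hy))
  have hlf : ContinuousOn (fun x => Real.log (f' x)) (Icc 0 1) :=
    hcont.log (fun x hx => (hpos x hx).ne')
  have hlg : ContinuousOn (fun y => Real.log (1 / f' (finv y))) (Icc 0 1) :=
    hg'c.log (fun x hx => (hg'pos x hx).ne')
  have hif : IntervalIntegrable f' volume 0 1 :=
    ContinuousOn.intervalIntegrable (by rwa [hu])
  have hig : IntervalIntegrable (fun y => 1 / f' (finv y)) volume 0 1 :=
    ContinuousOn.intervalIntegrable (by rwa [hu])
  have hIf : ∫ x in (0:ℝ)..1, (f' x - 1) = 0 := by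
    rw [intervalIntegral.integral_sub hif (by simp),
      intervalIntegral.integral_eq_sub_of_hasDerivAt (by rwa [hu]) hif]
    simp [h0, h1]
  have hIg : ∫ y in (0:ℝ)..1, (1 / f' (finv y) - 1) = 0 := by
    rw [intervalIntegral.integral_sub hig (by simp),
      intervalIntegral.integral_eq_sub_of_hasDerivAt (by rwa [hu]) hig]
    simp [hg0, hg1]
  have hex : ∃ c ∈ Icc (0:ℝ) 1, f' c ≠ 1 := by
    by_contra! hc
    obtain ⟨x, hx, hxne⟩ := hne
    apply hxne
    have hux : uIcc (0:ℝ) x ⊆ Icc 0 1 := by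
      rw [uIcc_of_le hx.1]
      exact Icc_subset_Icc_right hx.2
    have e := intervalIntegral.integral_eq_sub_of_hasDerivAt
      (fun t ht => hderiv t (hux ht)) (ContinuousOn.intervalIntegrable (hcont.mono hux))
    rw [intervalIntegral.integral_congr (g := fun _ => (1:ℝ)) (fun t ht => hc t (hux ht))] at e
    simp [h0] at e
    exact e.symm
  have hA : ∫ x in (0:ℝ)..1, Real.log (f' x) < 0 := by
    refine lt_of_lt_of_eq ?_ hIf
    obtain ⟨c, hc, hc1⟩ := hex
    exact intervalIntegral.integral_lt_integral_of_continuousOn_of_le_of_exists_lt one_pos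
      hlf (hcont.sub continuousOn_const)
      (fun x hx => Real.log_le_sub_one_of_pos (hpos x (Ioc_subset_Icc_self hx)))
      ⟨c, hc, Real.log_lt_sub_one_of_pos (hpos c hc) hc1⟩
  have hB : ∫ y in (0:ℝ)..1, Real.log (1 / f' (finv y)) ≤ 0 := by
    refine le_of_le_of_eq ?_ hIg
    exact intervalIntegral.integral_mono_on zero_le_one
      (ContinuousOn.intervalIntegrable (by rwa [hu])) (hig.sub (by simp))
      (fun y hy => Real.log_le_sub_one_of_pos (hg'pos y hy))
  constructor <;> linarith
end
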